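/- Let α be an alternating p-form on Q with 2 ≤ p ≤ q. Define the L-valued alternating p-form B⁺(α) by B⁺(α)(X_1,…,X_p) = Σ_{i=1}^q Σ_{r=1}^p (−1)^{p−r} (e_i⌟α)(X_1,…,X̂_r,…,X_p)·A_{e_i}X_r (the hat denoting omission; this is Σ_i (e_i⌟α)∧A_{e_i}, where A_{e_i} is viewed as the L-valued 1-form Y ↦ A_{e_i}Y), and set |B⁺(α)|² = (1/p!)·Σ_{i_1,…,i_p=1}^q |B⁺(α)(e_{i_1},…,e_{i_p})|_L². Then |B⁺(α)|² = Σ_{i,j,k=1}^q ⟨A_{e_k}e_i, A_{e_k}e_j⟩·⟨e_i⌟α, e_j⌟α⟩ + Σ_{i,j,k,l=1}^q ⟨A_{e_i}e_l, A_{e_j}e_k⟩·⟨(e_j∧e_i)⌟α, (e_l∧e_k)⌟α⟩. -/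

import Mathlib

open scoped BigOperators RealInnerProductSpace

variable {Q : Type*} [NormedAddCommGroup Q] [InnerProductSpace ℝ Q]

/-- Inner product of two `p`-forms with respect to an orthonormal frame `e`:
`⟨α,β⟩ = (1/p!) ∑_{i₁,…,i_p} α(e_{i₁},…,e_{i_p}) β(e_{i₁},…,e_{i_p})`. -/
noncomputable def formInner {q p : ℕ} (e : Fin q → Q)
    (α β : AlternatingMap ℝ Q ℝ (Fin p)) : ℝ :=
  (1 / (Nat.factorial p : ℝ)) * ∑ f : Fin p → Fin q, α (e ∘ f) * β (e ∘ f)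

/-- Interior product `X ⌟ α` of a vector with a `p`-form (zero when `p = 0`).
The interior product with a decomposable `2`-vector is then `(X∧Y)⌟α = X⌟(Y⌟α)`,
i.e. `((X∧Y)⌟α)(Z₁,…) = α(Y,X,Z₁,…)`. -/
noncomputable def iprod : ∀ {p : ℕ}, Q → AlternatingMap ℝ Q ℝ (Fin p) →
    AlternatingMap ℝ Q ℝ (Fin (p - 1))
  | 0, _, _ => 0
  | _ + 1, X, α => α.curryLeft X

/-- Reindexing a sum over index tuples against an alternating form. -/
theorem sum_alt_reindex {q m : ℕ} {N : Type*} [NormedAddCommGroup N] [InnerProductSpace ℝ N]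
    (e : Fin q → Q) (Φ : AlternatingMap ℝ Q N (Fin (m + 1)))
    (F : Fin q → (Fin m → Fin q) → N) :
    ∑ f : Fin (m + 1) → Fin q, ⟪Φ (e ∘ f),
        ∑ t : Fin (m + 1), (-1 : ℝ) ^ (t : ℕ) • F (f t) (f ∘ t.succAbove)⟫
      = ((m + 1 : ℕ) : ℝ) * ∑ k : Fin q, ∑ g : Fin m → Fin q,
          ⟪Φ (e ∘ (Fin.cons k g : Fin (m + 1) → Fin q)), F k g⟫ := by
  have key : ∀ t : Fin (m + 1), ∑ f : Fin (m + 1) → Fin q, ⟪Φ (e ∘ f),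
        (-1 : ℝ) ^ (t : ℕ) • F (f t) (f ∘ t.succAbove)⟫
      = ∑ k : Fin q, ∑ g : Fin m → Fin q,
          ⟪Φ (e ∘ (Fin.cons k g : Fin (m + 1) → Fin q)), F k g⟫ := by
    intro t
    rw [← (Fin.insertNthEquiv (fun _ => Fin q) t).sum_comp, Fintype.sum_prod_type]
    refine Finset.sum_congr rfl fun k _ => Finset.sum_congr rfl fun g _ => ?_
    have h1 : e ∘ (t.insertNth k g : Fin (m + 1) → Fin q)
        = (t.insertNth (e k) (e ∘ g) : Fin (m + 1) → Q) := by
      funext x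
      refine Fin.succAboveCases t ?_ (fun y => ?_) x <;> simp
    have h2 : e ∘ (Fin.cons k g : Fin (m + 1) → Fin q) = Matrix.vecCons (e k) (e ∘ g) := by
      funext x
      refine Fin.cases ?_ (fun y => ?_) x <;> simp
    have h3 : (t.insertNth k g : Fin (m + 1) → Fin q) ∘ t.succAbove = g := by
      funext x; simp
    have h4 : Φ (t.insertNth (e k) (e ∘ g) : Fin (m + 1) → Q)
        = (-1 : ℝ) ^ (t : ℕ) • Φ (Matrix.vecCons (e k) (e ∘ g)) := by
      rw [AlternatingMap.map_insertNth]
      rcases neg_one_pow_eq_or ℤ (t : ℕ) with h | h <;>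
      rcases Nat.even_or_odd (t : ℕ) with h' | h' <;> simp [h'.neg_one_pow]
    have h0 : (Fin.insertNthEquiv (fun _ => Fin q) t) (k, g) = t.insertNth k g := rfl
    simp only [h0, Fin.insertNth_apply_same]
    rw [h1, h2, h3, h4, inner_smul_left, inner_smul_right, ← mul_assoc]
    simp [← mul_pow]
  simp only [inner_sum]
  rw [Finset.sum_comm]
  simp only [key]
  simp

theorem altSum_apply {q m : ℕ} {L : Type*} [NormedAddCommGroup L]
    [InnerProductSpace ℝ L] (f : Fin q → AlternatingMap ℝ Q L (Fin m)) (v : Fin m → Q) :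
    (∑ i, f i) v = ∑ i, f i v :=
  map_sum (⟨⟨fun g => g v, rfl⟩, fun _ _ => rfl⟩ : AlternatingMap ℝ Q L (Fin m) →+ L) f _

/-- The map `X ↦ ∑ᵢ (eᵢ⌟α) ⊗ A(eᵢ, X)`. -/
noncomputable def bplusCurried {q m : ℕ} {L : Type*} [NormedAddCommGroup L]
    [InnerProductSpace ℝ L] (e : Fin q → Q)
    (A : Q →ₗ[ℝ] Q →ₗ[ℝ] L) (α : AlternatingMap ℝ Q ℝ (Fin (m + 1))) :
    Q →ₗ[ℝ] AlternatingMap ℝ Q L (Fin m) where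
  toFun X := ∑ i, (LinearMap.toSpanSingleton ℝ L (A (e i) X)).compAlternatingMap
    (α.curryLeft (e i))
  map_add' X Y := by
    ext v
    simp [altSum_apply, Finset.sum_add_distrib]
  map_smul' c X := by
    ext v
    simp [altSum_apply, Finset.smul_sum, smul_comm c]

theorem bplusCurried_apply {q m : ℕ} {L : Type*} [NormedAddCommGroup L]
    [InnerProductSpace ℝ L] (e : Fin q → Q)
    (A : Q →ₗ[ℝ] Q →ₗ[ℝ] L) (α : AlternatingMap ℝ Q ℝ (Fin (m + 1))) (X : Q) (v : Fin m → Q) :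
    bplusCurried e A α X v = ∑ i, α (Matrix.vecCons (e i) v) • A (e i) X := by
  simp [bplusCurried, altSum_apply]

theorem alt_real_apply {m : ℕ} {L : Type*} [NormedAddCommGroup L]
    [InnerProductSpace ℝ L] (F : Q →ₗ[ℝ] AlternatingMap ℝ Q L (Fin m)) {q : ℕ} (e : Fin q → Q)
    (f : Fin (m + 1) → Fin q) :
    AlternatingMap.alternatizeUncurryFin F (e ∘ f)
      = ∑ t : Fin (m + 1), (-1 : ℝ) ^ (t : ℕ) • F (e (f t)) (e ∘ (f ∘ t.succAbove)) := by
  rw [AlternatingMap.alternatizeUncurryFin_apply]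
  refine Finset.sum_congr rfl fun t _ => ?_
  have : t.removeNth (e ∘ f) = e ∘ (f ∘ t.succAbove) := rfl
  rw [this]
  rcases Nat.even_or_odd (t : ℕ) with h' | h' <;> simp [h'.neg_one_pow]

/-- Norm of an alternatization. -/
theorem alt_norm_sq {q m : ℕ} {L : Type*} [NormedAddCommGroup L]
    [InnerProductSpace ℝ L] (F : Q →ₗ[ℝ] AlternatingMap ℝ Q L (Fin (m + 1))) (e : Fin q → Q) :
    ∑ f : Fin (m + 2) → Fin q, ‖AlternatingMap.alternatizeUncurryFin F (e ∘ f)‖ ^ 2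
      = ((m + 2 : ℕ) : ℝ) * (∑ k : Fin q, ∑ g : Fin (m + 1) → Fin q, ‖F (e k) (e ∘ g)‖ ^ 2)
        - ((m + 2 : ℕ) : ℝ) * (((m + 1 : ℕ) : ℝ) * ∑ k : Fin q, ∑ l : Fin q,
          ∑ h : Fin m → Fin q,
          ⟪F (e k) (e ∘ (Fin.cons l h : Fin (m + 1) → Fin q)),
            F (e l) (e ∘ (Fin.cons k h : Fin (m + 1) → Fin q))⟫) := by
  have h1 : ∀ f : Fin (m + 2) → Fin q, ‖AlternatingMap.alternatizeUncurryFin F (e ∘ f)‖ ^ 2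
      = ⟪AlternatingMap.alternatizeUncurryFin F (e ∘ f),
        ∑ t : Fin (m + 2), (-1 : ℝ) ^ (t : ℕ) • F (e (f t)) (e ∘ (f ∘ t.succAbove))⟫ := by
    intro f
    rw [← alt_real_apply, real_inner_self_eq_norm_sq]
  simp only [h1]
  rw [sum_alt_reindex e (AlternatingMap.alternatizeUncurryFin F)
    (fun k g => F (e k) (e ∘ g)), ← mul_sub, Finset.mul_sum _ _ ((m + 1 : ℕ) : ℝ), ← Finset.sum_sub_distrib]
  congr 1
  refine Finset.sum_congr rfl fun k _ => ?_
  rw [← sum_alt_reindex e (F (e k))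
    (fun l h => F (e l) (e ∘ (Fin.cons k h : Fin (m + 1) → Fin q))), ← Finset.sum_sub_distrib]
  refine Finset.sum_congr rfl fun g _ => ?_
  rw [alt_real_apply, Fin.sum_univ_succ, inner_add_left, sub_eq_add_neg, ← inner_neg_right,
    real_inner_comm _ (F (e k) (e ∘ g))]
  congr 1
  · have : (Fin.cons k g : Fin (m + 2) → Fin q) ∘ Fin.succAbove 0 = g := by
      funext x; simp
    rw [this]
    simp
  · rw [← Finset.sum_neg_distrib]
    congr 1
    refine Finset.sum_congr rfl fun t _ => ?_
    have : (Fin.cons k g : Fin (m + 2) → Fin q) ∘ Fin.succAbove t.succ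
        = Fin.cons k (g ∘ t.succAbove) := by
      funext x
      refine Fin.cases ?_ (fun y => ?_) x <;> simp
    rw [this]
    simp [pow_succ]

/-- For a `p`-form `α` with `2 ≤ p ≤ q` (here `p = n+2`) and the O'Neill tensor `A`, the
`L`-valued `p`-form `B⁺(α) = ∑_i (e_i⌟α) ∧ A_{e_i}`, i.e.
`B⁺(α)(X₁,…,X_p) = ∑_i ∑_{t=1}^p (−1)^{p−t}(e_i⌟α)(X₁,…,X̂_t,…,X_p)·A_{e_i}X_t`,
satisfies `|B⁺(α)|² = ∑_{i,j,k}⟨A_{e_k}e_i,A_{e_k}e_j⟩⟨e_i⌟α,e_j⌟α⟩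
 + ∑_{i,j,k,l}⟨A_{e_i}e_l,A_{e_j}e_k⟩⟨(e_j∧e_i)⌟α,(e_l∧e_k)⌟α⟩`,
where `|B⁺(α)|² = (1/p!)∑_{i₁,…,i_p}|B⁺(α)(e_{i₁},…,e_{i_p})|²`. -/
theorem stmt5 {q r n : ℕ} (hpq : n + 2 ≤ q)
    (e : OrthonormalBasis (Fin q) ℝ Q)
    {L : Type*} [NormedAddCommGroup L] [InnerProductSpace ℝ L]
    (V : OrthonormalBasis (Fin r) ℝ L)
    (A : Q →ₗ[ℝ] Q →ₗ[ℝ] L) (hA : ∀ X Y : Q, A X Y = - A Y X)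
    (α : AlternatingMap ℝ Q ℝ (Fin (n + 2))) :
    (1 / (Nat.factorial (n + 2) : ℝ)) * ∑ f : Fin (n + 2) → Fin q,
        ‖∑ i : Fin q, ∑ t : Fin (n + 2),
            ((-1 : ℝ) ^ (n + 1 - (t : ℕ)) * (iprod (e i) α) (⇑e ∘ f ∘ t.succAbove)) •
              A (e i) (e (f t))‖ ^ 2
      = (∑ i : Fin q, ∑ j : Fin q, ∑ k : Fin q,
            ⟪A (e k) (e i), A (e k) (e j)⟫ *
              formInner ⇑e (iprod (e i) α) (iprod (e j) α))
        + ∑ i : Fin q, ∑ j : Fin q, ∑ k : Fin q, ∑ l : Fin q,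
            ⟪A (e i) (e l), A (e j) (e k)⟫ *
              formInner ⇑e (iprod (e j) (iprod (e i) α)) (iprod (e l) (iprod (e k) α)) := by
  have hcons : ∀ {m : ℕ} (k : Fin q) (g : Fin m → Fin q),
      e ∘ (Fin.cons k g : Fin (m + 1) → Fin q) = Matrix.vecCons (e k) (e ∘ g) := by
    intro m k g
    funext x
    refine Fin.cases ?_ (fun y => ?_) x <;> simp
  have hB : ∀ f : Fin (n + 2) → Fin q, ‖∑ i : Fin q, ∑ t : Fin (n + 2),
            ((-1 : ℝ) ^ (n + 1 - (t : ℕ)) * (iprod (e i) α) (⇑e ∘ f ∘ t.succAbove)) •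
              A (e i) (e (f t))‖ ^ 2
      = ‖AlternatingMap.alternatizeUncurryFin (bplusCurried e A α) (e ∘ f)‖ ^ 2 := by
    intro f
    have : ∑ i : Fin q, ∑ t : Fin (n + 2),
            ((-1 : ℝ) ^ (n + 1 - (t : ℕ)) * (iprod (e i) α) (⇑e ∘ f ∘ t.succAbove)) •
              A (e i) (e (f t))
        = (-1 : ℝ) ^ (n + 1) •
          AlternatingMap.alternatizeUncurryFin (bplusCurried e A α) (e ∘ f) := by
      rw [alt_real_apply, Finset.sum_comm, Finset.smul_sum]
      refine Finset.sum_congr rfl fun t _ => ?_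
      rw [bplusCurried_apply, Finset.smul_sum, Finset.smul_sum]
      refine Finset.sum_congr rfl fun i _ => ?_
      rw [smul_smul, smul_smul]
      congr 1
      have ht : (-1 : ℝ) ^ (n + 1 - (t : ℕ)) = (-1) ^ (n + 1) * (-1) ^ (t : ℕ) := by
        have h2 : (n + 1 - (t : ℕ)) + t = n + 1 := by omega
        conv_rhs => rw [← h2, pow_add, mul_assoc, ← mul_pow]
        simp
      rw [ht]
      rfl
    rw [this, norm_smul]
    simp
  have T1 : (∑ k : Fin q, ∑ g : Fin (n + 1) → Fin q, ‖bplusCurried e A α (e k) (e ∘ g)‖ ^ 2)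
      = ((n + 1).factorial : ℝ) * (∑ i : Fin q, ∑ j : Fin q, ∑ k : Fin q,
            ⟪A (e k) (e i), A (e k) (e j)⟫ *
              formInner ⇑e (iprod (e i) α) (iprod (e j) α)) := by
    have hf : ∀ i j, formInner ⇑e (iprod (e i) α) (iprod (e j) α)
        = (1 / ((n + 1).factorial : ℝ)) * ∑ g : Fin (n + 1) → Fin q,
          α (Matrix.vecCons (e i) (e ∘ g)) * α (Matrix.vecCons (e j) (e ∘ g)) :=
      fun i j => rfl
    have hne : ((n + 1).factorial : ℝ) ≠ 0 := by positivity
    simp only [hf, bplusCurried_apply, ← real_inner_self_eq_norm_sq, sum_inner, inner_sum,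
      inner_smul_left, inner_smul_right, Finset.mul_sum]
    simp only [Finset.sum_comm (s := (Finset.univ : Finset (Fin (n + 1) → Fin q)))]
    rw [Finset.sum_comm]
    refine Finset.sum_congr rfl fun i _ => ?_
    rw [Finset.sum_comm]
    refine Finset.sum_congr rfl fun j _ => Finset.sum_congr rfl fun k _ =>
      Finset.sum_congr rfl fun g _ => ?_
    rw [hA (e k) (e i), hA (e k) (e j), inner_neg_neg]
    field_simp
    simp only [RCLike.conj_to_real, real_inner_comm (A (e j) (e k))]
    try ring
  have T2 : (∑ k : Fin q, ∑ l : Fin q, ∑ h : Fin n → Fin q,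
          ⟪bplusCurried e A α (e k) (e ∘ (Fin.cons l h : Fin (n + 1) → Fin q)),
            bplusCurried e A α (e l) (e ∘ (Fin.cons k h : Fin (n + 1) → Fin q))⟫)
      = - ((n.factorial : ℝ) * ∑ i : Fin q, ∑ j : Fin q, ∑ k : Fin q, ∑ l : Fin q,
            ⟪A (e i) (e l), A (e j) (e k)⟫ *
              formInner ⇑e (iprod (e j) (iprod (e i) α)) (iprod (e l) (iprod (e k) α))) := by
    have hf : ∀ i j k l, formInner ⇑e (iprod (e j) (iprod (e i) α)) (iprod (e l) (iprod (e k) α))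
        = (1 / (n.factorial : ℝ)) * ∑ h : Fin n → Fin q,
          α (Matrix.vecCons (e i) (Matrix.vecCons (e j) (e ∘ h))) *
          α (Matrix.vecCons (e k) (Matrix.vecCons (e l) (e ∘ h))) :=
      fun i j k l => rfl
    have hne : (n.factorial : ℝ) ≠ 0 := by positivity
    have hL : ∀ k l, ∑ h : Fin n → Fin q,
          ⟪bplusCurried e A α (e k) (e ∘ (Fin.cons l h : Fin (n + 1) → Fin q)),
            bplusCurried e A α (e l) (e ∘ (Fin.cons k h : Fin (n + 1) → Fin q))⟫
        = ∑ i, ∑ j, ∑ h : Fin n → Fin q,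
          α (Matrix.vecCons (e i) (Matrix.vecCons (e l) (e ∘ h))) *
          α (Matrix.vecCons (e j) (Matrix.vecCons (e k) (e ∘ h))) *
          ⟪A (e i) (e k), A (e j) (e l)⟫ := by
      intro k l
      simp only [hcons, bplusCurried_apply, sum_inner, inner_sum,
        real_inner_smul_left, real_inner_smul_right]
      rw [Finset.sum_comm]
      rw [Finset.sum_comm]
      conv_rhs =>
        rw [Finset.sum_congr rfl fun i _ => Finset.sum_comm]
        rw [Finset.sum_comm]
      refine Finset.sum_congr rfl fun h _ => ?_
      rw [Finset.sum_comm]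
      refine Finset.sum_congr rfl fun i _ => Finset.sum_congr rfl fun j _ => ?_
      ring
    simp only [hL, hf]
    -- order the left sum as i, l, j, k
    have hre : ∀ G : Fin q → Fin q → Fin q → Fin q → ℝ,
        ∑ k, ∑ l, ∑ i, ∑ j, G k l i j = ∑ i, ∑ l, ∑ j, ∑ k, G k l i j := by
      intro G
      have a1 : ∀ k, ∑ l, ∑ i, ∑ j, G k l i j = ∑ i, ∑ l, ∑ j, G k l i j :=
        fun k => Finset.sum_comm
      rw [Finset.sum_congr rfl fun k _ => a1 k, Finset.sum_comm]
      refine Finset.sum_congr rfl fun i _ => ?_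
      rw [Finset.sum_comm]
      refine Finset.sum_congr rfl fun l _ => ?_
      rw [Finset.sum_comm]
    rw [hre]
    simp only [Finset.mul_sum, ← Finset.sum_neg_distrib]
    refine Finset.sum_congr rfl fun i _ => Finset.sum_congr rfl fun l _ =>
      Finset.sum_congr rfl fun j _ => Finset.sum_congr rfl fun k _ =>
      Finset.sum_congr rfl fun h _ => ?_
    rw [hA (e j) (e l), inner_neg_right]
    field_simp
  simp only [hB]
  rw [alt_norm_sq, T1, T2]
  have hne : (n.factorial : ℝ) ≠ 0 := by positivity
  have h1 : ((n + 1).factorial : ℝ) = (n + 1) * n.factorial := by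
    rw [Nat.factorial_succ]; push_cast; ring
  have h2 : ((n + 2).factorial : ℝ) = (n + 2) * ((n + 1) * n.factorial) := by
    rw [Nat.factorial_succ, Nat.factorial_succ]; push_cast; ring
  have h3 : (n : ℝ) + 1 ≠ 0 := by positivity
  have h4 : (n : ℝ) + 2 ≠ 0 := by positivity
  rw [h1, h2]
  push_cast
  field_simp
  ring
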